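/- arXiv:math/0508228 — 2 statements merged into one kernel-verified Lean document; each statement's English description precedes it below -/
import Mathlib

section
/- The positive-norm complex line in L ⊗ ℂ ≅ ℂ^{1,13} spanned by the Weyl vector ρ̄ = (Σ_{x∈𝒫} x + ξ Σ_{l∈ℒ} l)/26 is the unique point of the complex hyperbolic space ℂH¹³ fixed by the group Q. -/
noncomputable section

open ComplexConjugate

namespace Bimonster

/-- The primitive cube root of unity `ω = e^{2πi/3}`. -/
def ω : ℂ := Complex.exp (2 * (Real.pi : ℂ) * Complex.I / 3)

/-- `θ = ω - ω̄ = √-3`. -/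
def θ : ℂ := ω - conj ω

/-- `ξ = e^{-πi/6}`. -/
def ξ : ℂ := Complex.exp (-((Real.pi : ℂ) * Complex.I) / 6)

/-- Membership in the ring of Eisenstein integers `ℰ = ℤ[ω] ⊆ ℂ`. -/
def EisP (z : ℂ) : Prop := ∃ a b : ℤ, z = (a : ℂ) + (b : ℂ) * ω

/-- The units of the ring of Eisenstein integers. -/
def EisUnit (z : ℂ) : Prop :=
  z = 1 ∨ z = -1 ∨ z = ω ∨ z = -ω ∨ z = ω ^ 2 ∨ z = -ω ^ 2

/-- The underlying 14-dimensional complex vector space of `L = 3E₈ ⊕ H`. -/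
abbrev V : Type := Fin 14 → ℂ

/-- The Hermitian form of `L = 3E₈ ⊕ H`: negative definite standard form on the twelve
`E₈`-coordinates, and the hyperbolic cell with Gram matrix `[[0, θ̄], [θ, 0]]` on the
last two coordinates.  It is conjugate-linear in the first variable. -/
def herm (u v : V) : ℂ :=
  -(∑ i : Fin 12, conj (u (Fin.castLE (by norm_num) i)) * v (Fin.castLE (by norm_num) i)) +
    conj (u 12) * conj θ * v 13 + conj (u 13) * θ * v 12

/-- First generator of the ternary tetracode `𝒞₄ ⊆ 𝔽₃⁴`. -/
def tet1 : Fin 4 → ℤ := ![1, 1, -1, 0]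

/-- Second generator of the ternary tetracode `𝒞₄ ⊆ 𝔽₃⁴`. -/
def tet2 : Fin 4 → ℤ := ![0, 1, 1, 1]

/-- The complex `E₈` lattice: vectors of `ℰ⁴` whose reduction mod `θ` lies in the
ternary tetracode. -/
def inE8 (w : Fin 4 → ℂ) : Prop :=
  (∀ i, EisP (w i)) ∧
    ∃ s t : ℤ, ∀ i : Fin 4, ∃ a b : ℤ,
      w i - ((tet1 i * s + tet2 i * t : ℤ) : ℂ) = θ * ((a : ℂ) + (b : ℂ) * ω)

/-- The lattice `L = 3E₈ ⊕ H` as a subset of `ℂ¹⁴`. -/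
def Lset : Set V :=
  {v | (∀ k : Fin 3,
      inE8 fun i : Fin 4 =>
        v ⟨4 * (k : ℕ) + (i : ℕ), by have hk := k.isLt; have hi := i.isLt; omega⟩) ∧
    EisP (v 12) ∧ EisP (v 13)}

/-- A root of `L`: a primitive lattice vector of norm `-3`. -/
def IsRoot (r : V) : Prop :=
  r ∈ Lset ∧ herm r r = -3 ∧
    ∀ α : ℂ, EisP α → ∀ y ∈ Lset, r = α • y → EisUnit α

/-- The `μ`-reflection in a vector `r`: `v ↦ v − (1−μ)·r·⟨r,v⟩/|r|²`. -/
def reflMap (μ : ℂ) (r v : V) : V := v - ((1 - μ) * herm r v / herm r r) • r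

/-- The automorphism group of the lattice `L`: invertible `ℂ`-linear maps preserving
the lattice and the Hermitian form. -/
def AutL : Subgroup (V ≃ₗ[ℂ] V) where
  carrier := {g | (∀ v : V, v ∈ Lset ↔ g v ∈ Lset) ∧ ∀ u v : V, herm (g u) (g v) = herm u v}
  one_mem' := ⟨fun _ => Iff.rfl, fun _ _ => rfl⟩
  mul_mem' := by
    rintro f g ⟨hf1, hf2⟩ ⟨hg1, hg2⟩
    refine ⟨fun v => ?_, fun u v => ?_⟩
    · exact (hg1 v).trans (hf1 (g v))
    · exact (hf2 (g u) (g v)).trans (hg2 u v)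
  inv_mem' := by
    rintro g ⟨hg1, hg2⟩
    refine ⟨fun v => ?_, fun u v => ?_⟩
    · have h := hg1 (g.symm v)
      have hv : g (g.symm v) = v := g.apply_symm_apply v
      rw [hv] at h
      exact h.symm
    · have h := hg2 (g.symm u) (g.symm v)
      have hu : g (g.symm u) = u := g.apply_symm_apply u
      have hv : g (g.symm v) = v := g.apply_symm_apply v
      rw [hu, hv] at h
      exact h.symm

/-- The set of elements of `Aut(L)` acting as the `ω`-reflection in some root
belonging to `S`. -/
def ReflAutos (S : Set V) : Set (V ≃ₗ[ℂ] V) :=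
  {g | g ∈ AutL ∧ ∃ r ∈ S, ∀ v, g v = reflMap ω r v}

/-- The reflection group `R(L)`: the subgroup of `Aut(L)` generated by the
`ω`-reflections in all roots of `L`. -/
def RL : Subgroup (V ≃ₗ[ℂ] V) := Subgroup.closure (ReflAutos {r | IsRoot r})

/-- Two roots are adjacent when `|⟨a,b⟩| = √3`, i.e. when their `ω`-reflections braid. -/
def Adj (a b : V) : Prop := ‖herm a b‖ = Real.sqrt 3

/-- A set of roots is connected if the graph given by adjacency on it is connected. -/
def ConnectedSet (Φ : Set V) : Prop :=
  ∀ a ∈ Φ, ∀ b ∈ Φ, Relation.ReflTransGen (fun x y => x ∈ Φ ∧ y ∈ Φ ∧ Adj x y) a b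

/-- `Rad Φ` is the radical of a set `Φ` of roots: the closure of `Φ` under reflecting
members of the set in each other (and identification of unit multiples). -/
inductive Rad (Φ : Set V) : V → Prop
  | base {r : V} : r ∈ Φ → Rad Φ r
  | refl {a b : V} : Rad Φ a → Rad Φ b → Rad Φ (reflMap ω a b)
  | inv {a b : V} : Rad Φ a → Rad Φ b → Rad Φ (reflMap (conj ω) a b)
  | unit {u : ℂ} {r : V} : EisUnit u → Rad Φ r → Rad Φ (u • r)

/-- Shorthand for the entry `-θω²` occurring in the coordinates of the 26 roots. -/
def qc : ℂ := -(θ * ω ^ 2)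

/- The 26 roots of the diagram `D` in the coordinate system `3E₈ ⊕ H`. -/

def rA : V := ![0, 0, 0, 0, 0, 0, 0, 0, 0, 0, 0, 0, 1, ω ^ 2]
def rC1 : V := ![qc, 0, 0, 0, 0, 0, 0, 0, 0, 0, 0, 0, 0, 0]
def rC2 : V := ![0, 0, 0, 0, qc, 0, 0, 0, 0, 0, 0, 0, 0, 0]
def rC3 : V := ![0, 0, 0, 0, 0, 0, 0, 0, qc, 0, 0, 0, 0, 0]
def rE1 : V := ![0, qc, 0, 0, 0, 0, 0, 0, 0, 0, 0, 0, 0, 0]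
def rE2 : V := ![0, 0, 0, 0, 0, qc, 0, 0, 0, 0, 0, 0, 0, 0]
def rE3 : V := ![0, 0, 0, 0, 0, 0, 0, 0, 0, qc, 0, 0, 0, 0]
def rA1 : V := ![0, 0, 0, 0, 0, 0, 0, qc, 0, 0, 0, qc, ω, ω ^ 2]
def rA2 : V := ![0, 0, 0, qc, 0, 0, 0, 0, 0, 0, 0, qc, ω, ω ^ 2]
def rA3 : V := ![0, 0, 0, qc, 0, 0, 0, qc, 0, 0, 0, 0, ω, ω ^ 2]
def rG1 : V := ![0, 0, 0, qc, 0, 0, -qc, qc, 0, 0, -qc, qc, 2 * ω, 2 * ω ^ 2]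
def rG2 : V := ![0, 0, -qc, qc, 0, 0, 0, qc, 0, 0, -qc, qc, 2 * ω, 2 * ω ^ 2]
def rG3 : V := ![0, 0, -qc, qc, 0, 0, -qc, qc, 0, 0, 0, qc, 2 * ω, 2 * ω ^ 2]
def rF : V := ![0, 1, 1, -2, 0, 1, 1, -2, 0, 1, 1, -2, -2 + ω, -θ]
def rB1 : V := ![1, 0, 1, -1, 0, 0, 0, 0, 0, 0, 0, 0, -1, 0]
def rB2 : V := ![0, 0, 0, 0, 1, 0, 1, -1, 0, 0, 0, 0, -1, 0]
def rB3 : V := ![0, 0, 0, 0, 0, 0, 0, 0, 1, 0, 1, -1, -1, 0]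
def rD1 : V := ![1, 1, -1, 0, 0, 0, 0, 0, 0, 0, 0, 0, 0, 0]
def rD2 : V := ![0, 0, 0, 0, 1, 1, -1, 0, 0, 0, 0, 0, 0, 0]
def rD3 : V := ![0, 0, 0, 0, 0, 0, 0, 0, 1, 1, -1, 0, 0, 0]
def rF1 : V := ![0, 1, 1, 1, 0, 0, 0, 0, 0, 0, 0, 0, 0, 0]
def rF2 : V := ![0, 0, 0, 0, 0, 1, 1, 1, 0, 0, 0, 0, 0, 0]
def rF3 : V := ![0, 0, 0, 0, 0, 0, 0, 0, 0, 1, 1, 1, 0, 0]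
def rZ1 : V := ![0, 1, 1, -2, 1, 0, 1, -1, 1, 0, 1, -1, qc, -θ]
def rZ2 : V := ![1, 0, 1, -1, 0, 1, 1, -2, 1, 0, 1, -1, qc, -θ]
def rZ3 : V := ![1, 0, 1, -1, 1, 0, 1, -1, 0, 1, 1, -2, qc, -θ]

/-- The 13 roots of `D` labelled by the points of `P²(𝔽₃)`. -/
def pt : Fin 13 → V :=
  ![rA, rC1, rC2, rC3, rE1, rE2, rE3, rA1, rA2, rA3, rG1, rG2, rG3]

/-- The 13 roots of `D` labelled by the lines of `P²(𝔽₃)`. -/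
def lnr : Fin 13 → V :=
  ![rF, rB1, rB2, rB3, rD1, rD2, rD3, rF1, rF2, rF3, rZ1, rZ2, rZ3]

/-- The 26 roots of the diagram `D` (the incidence graph of `P²(𝔽₃)`). -/
def D26 : Set V := Set.range pt ∪ Set.range lnr

/-- The 16 roots forming the `M₆₆₆` diagram. -/
def M16 : Set V :=
  Set.range
    (![rA, rB1, rB2, rB3, rC1, rC2, rC3, rD1, rD2, rD3, rE1, rE2, rE3, rF1, rF2, rF3] :
      Fin 16 → V)

/-- The 26 vectors `(ρ₁,…,ρ₂₆) = (x₁,…,x₁₃, ξl₁,…,ξl₁₃)`. -/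
def ρv : Fin 26 → V := fun i =>
  if h : (i : ℕ) < 13 then pt ⟨(i : ℕ), h⟩
  else ξ • lnr ⟨(i : ℕ) - 13, by have := i.isLt; omega⟩

/-- The Weyl vector `ρ̄ = (Σ points + ξ Σ lines)/26`. -/
def ρbar : V := (26 : ℂ)⁻¹ • ((∑ i : Fin 13, pt i) + ξ • ∑ i : Fin 13, lnr i)

/-- The height of a root: `ht(r) = |⟨ρ̄, r⟩| / |ρ̄|²`. -/
def ht (r : V) : ℝ := ‖herm ρbar r‖ / ‖herm ρbar ρbar‖

/-- The subgroup `G ≅ PGL₃(𝔽₃)` of `Aut(L)`: automorphisms of `L` preserving the set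
of 13 point roots and the set of 13 line roots of the diagram `D`. -/
def Gsub : Subgroup (V ≃ₗ[ℂ] V) where
  carrier := {g | g ∈ AutL ∧ (⇑g) '' Set.range pt = Set.range pt ∧
    (⇑g) '' Set.range lnr = Set.range lnr}
  one_mem' := by
    refine ⟨one_mem AutL, ?_, ?_⟩ <;> simp
  mul_mem' := by
    rintro f g ⟨hf0, hf1, hf2⟩ ⟨hg0, hg1, hg2⟩
    refine ⟨mul_mem hf0 hg0, ?_, ?_⟩
    · have hco : (⇑(f * g)) = (⇑f) ∘ (⇑g) := rfl
      rw [hco, Set.image_comp, hg1, hf1]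
    · have hco : (⇑(f * g)) = (⇑f) ∘ (⇑g) := rfl
      rw [hco, Set.image_comp, hg2, hf2]
  inv_mem' := by
    rintro g ⟨hg0, hg1, hg2⟩
    refine ⟨inv_mem hg0, ?_, ?_⟩
    · conv_lhs => rw [← hg1]
      rw [← Set.image_comp]
      have : (⇑g⁻¹ ∘ ⇑g) = id := by
        funext x; exact g.symm_apply_apply x
      rw [this, Set.image_id]
    · conv_lhs => rw [← hg2]
      rw [← Set.image_comp]
      have : (⇑g⁻¹ ∘ ⇑g) = id := by
        funext x; exact g.symm_apply_apply x
      rw [this, Set.image_id]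

/-- The defining properties of the automorphism `σ`: it is an automorphism of `L`
which, for the polarity `δ` of `P²(𝔽₃)` pairing each point `x = [a:b:c]` with the
line `l = {aX+bY+cZ = 0}`, sends the point root `x` to `-ω·l` and the line root `l`
to `x`. -/
def SigmaSpec (σ : V ≃ₗ[ℂ] V) : Prop :=
  σ ∈ AutL ∧ ∃ δ : Fin 13 ≃ Fin 13,
    (∀ i j, Adj (pt i) (lnr (δ j)) ↔ Adj (pt j) (lnr (δ i))) ∧
    (∀ i, σ (pt i) = (-ω) • lnr (δ i)) ∧
    (∀ i, σ (lnr (δ i)) = pt i)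

/-- The group `Q` generated by `G` and `σ`. -/
def QGroup (σ : V ≃ₗ[ℂ] V) : Subgroup (V ≃ₗ[ℂ] V) :=
  Subgroup.closure ({σ} ∪ (Gsub : Set (V ≃ₗ[ℂ] V)))

/-!
Two vectors of positive norm are never orthogonal in signature `(1, 13)`, and an isometry has the
same eigenvalue on two non-orthogonal eigenvectors as soon as one eigenvalue is a unit complex
number. Since `G` fixes `ρ̄` and `σ ρ̄ = ξ ρ̄`, a positive vector spanning a line fixed by `Q` is
therefore fixed by `G` and multiplied by `ξ` under `σ`.

Such a vector `v` is determined by a single inner product. The lattice `L` is spanned over `ℰ` by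
the 26 roots, and the form is nondegenerate, so every permutation of the roots that respects their
Gram matrix extends to an automorphism of `L`. Labelling `P²(𝔽₃)` by `ℤ/13` through the perfect
difference set `{0, 1, 3, 9}`, the shifts give elements of `G` that are transitive on points, and
`σ` exchanges points and lines. If `v` is orthogonal to one point root it is then orthogonal to all
26 roots, hence zero; so these vectors form the line `ℂ ρ̄`.
-/

lemma map_sum_eq_sum_of_image_range_eq {F M ι : Type*} [AddCommMonoid M] [FunLike F M M]
    [AddMonoidHomClass F M M] [Fintype ι] {v : ι → M} (hv : Function.Injective v) {g : F}
    (hg : Function.Injective g) (h : g '' Set.range v = Set.range v) : g (∑ i, v i) = ∑ i, v i := by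
  calc g (∑ i, v i) = ∑ᶠ i, g (v i) := by rw [map_sum, finsum_eq_sum_of_fintype]
    _ = ∑ᶠ x ∈ Set.range (g ∘ v), x := (finsum_mem_range (f := id) (hg.comp hv)).symm
    _ = ∑ᶠ x ∈ Set.range v, x := by rw [Set.range_comp, h]
    _ = ∑ i, v i := by rw [finsum_mem_range (f := fun x => x) hv, finsum_eq_sum_of_fintype]

section SesquilinearForms

variable {R M ι : Type*} [CommRing R] [AddCommGroup M] [Module R M] {I : R →+* R}
  {B : M →ₛₗ[I] M →ₗ[R] R}

lemma eq_zero_of_forall_apply_eq_zero_of_span (hB : B.SeparatingRight) {v : ι → M}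
    (hv : Submodule.span R (Set.range v) = ⊤) {x : M} (hx : ∀ k, B (v k) x = 0) : x = 0 := by
  have hBx : B.flip x = 0 := LinearMap.ext_on_range hv hx
  exact hB x fun y => LinearMap.congr_fun hBx y

lemma apply_map_map_eq_of_span {v : ι → M} (hv : Submodule.span R (Set.range v) = ⊤)
    {g : M →ₗ[R] M} (hg : ∀ k l, B (g (v k)) (g (v l)) = B (v k) (v l)) (x y : M) :
    B (g x) (g y) = B x y := by
  have hpull : (B.comp g).compl₂ g = B := LinearMap.ext_on_range hv fun k =>
    LinearMap.ext_on_range hv fun l => hg k l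
  exact LinearMap.congr_fun₂ hpull x y

lemma linearCombination_eq_zero_of_gram_eq [Fintype ι] (hB : B.SeparatingRight) {v w : ι → M}
    (hw : Submodule.span R (Set.range w) = ⊤) (hvw : ∀ k l, B (w k) (w l) = B (v k) (v l))
    {c : ι → R} (hc : Fintype.linearCombination R v c = 0) :
    Fintype.linearCombination R w c = 0 := by
  refine eq_zero_of_forall_apply_eq_zero_of_span hB hw fun k => ?_
  calc B (w k) (Fintype.linearCombination R w c)
      = B (v k) (Fintype.linearCombination R v c) := by
        simp [Fintype.linearCombination_apply, hvw]
    _ = 0 := by rw [hc, map_zero]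

/- Both families present `M` as the quotient of `ι → R` by the radical of their common Gram
matrix. -/
lemma exists_isometry_of_gram_eq [Finite ι] (hB : B.SeparatingRight) {v w : ι → M}
    (hv : Submodule.span R (Set.range v) = ⊤) (hw : Submodule.span R (Set.range w) = ⊤)
    (hvw : ∀ k l, B (w k) (w l) = B (v k) (v l)) :
    ∃ g : M ≃ₗ[R] M, (∀ k, g (v k) = w k) ∧ ∀ x y, B (g x) (g y) = B x y := by
  classical
  obtain ⟨_⟩ := nonempty_fintype ι
  have hker : (Fintype.linearCombination R v).ker = (Fintype.linearCombination R w).ker :=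
    le_antisymm (fun _ => linearCombination_eq_zero_of_gram_eq hB hw hvw)
      (fun _ => linearCombination_eq_zero_of_gram_eq hB hv fun k l => (hvw k l).symm)
  have surjective_of_span {u : ι → M} (hu : Submodule.span R (Set.range u) = ⊤) :
      Function.Surjective (Fintype.linearCombination R u) := by
    rw [← LinearMap.range_eq_top, Fintype.range_linearCombination, hu]
  let g : M ≃ₗ[R] M :=
    ((Fintype.linearCombination R v).quotKerEquivOfSurjective (surjective_of_span hv)).symm ≪≫ₗ
      Submodule.quotEquivOfEq _ _ hker ≪≫ₗ
      (Fintype.linearCombination R w).quotKerEquivOfSurjective (surjective_of_span hw)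
  have hg (k : ι) : g (v k) = w k := by
    have hpre : ((Fintype.linearCombination R v).quotKerEquivOfSurjective
        (surjective_of_span hv)).symm (v k) = Submodule.Quotient.mk (Pi.single k 1) := by
      rw [LinearEquiv.symm_apply_eq]
      simp
    simp [g, hpre]
  exact ⟨g, hg, apply_map_map_eq_of_span (g := g.toLinearMap) hv fun k l => by
    simpa [hg] using hvw k l⟩

lemma injective_of_gram_eq_diagonal [DecidableEq ι] {v : ι → M} {c : R} (hc : c ≠ 0)
    (hv : ∀ i j, B (v i) (v j) = if i = j then c else 0) : Function.Injective v := by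
  intro i j hij
  by_contra hne
  have hBij := hv i j
  rw [if_neg hne, ← hij, hv, if_pos rfl] at hBij
  exact hc hBij

lemma apply_sum_sum_of_gram_eq_diagonal [Fintype ι] [DecidableEq ι] {v : ι → M} {c : R}
    (hv : ∀ i j, B (v i) (v j) = if i = j then c else 0) :
    B (∑ i, v i) (∑ i, v i) = Fintype.card ι * c := by
  simp [hv]

lemma eigenvalue_eq_of_isometry [IsDomain R] {g : M → M} (hg : ∀ x y, B (g x) (g y) = B x y)
    {x y : M} {a c : R} (hx : g x = a • x) (hy : g y = c • y) (ha : I a * a = 1)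
    (hxy : B x y ≠ 0) : c = a := by
  have hac : I a * c = 1 := by
    have hBxy := hg x y
    rwa [hx, hy, map_smul, LinearMap.map_smulₛₗ, LinearMap.smul_apply, smul_eq_mul, smul_eq_mul,
      mul_left_comm, ← mul_assoc, mul_eq_right₀ hxy] at hBxy
  have hIa : I a ≠ 0 := left_ne_zero_of_mul_eq_one ha
  exact mul_left_cancel₀ hIa (hac.trans ha.symm)

end SesquilinearForms

/- The combination `f v • u - f u • v` lies in the kernel of `f`, and for orthogonal `u`, `v` its
norm is `|f v|² |u|² + |f u|² |v|²`. -/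
lemma apply_ne_zero_of_pos_of_nonpos_on_ker {M : Type*} [AddCommGroup M] [Module ℂ M]
    {B : M →ₗ⋆[ℂ] M →ₗ[ℂ] ℂ} (hB : B.IsSymm) (f : M →ₗ[ℂ] ℂ)
    (hf : ∀ w, f w = 0 → (B w w).re ≤ 0) {u v : M} (hu : 0 < (B u u).re) (hv : 0 < (B v v).re) :
    B u v ≠ 0 := by
  intro huv
  have hvu : B v u = 0 := hB.eq_iff.mp huv
  have hfv : f v ≠ 0 := fun h => (hf v h).not_gt hv
  have hnorm : B (f v • u - f u • v) (f v • u - f u • v) =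
      (Complex.normSq (f v) : ℂ) * B u u + (Complex.normSq (f u) : ℂ) * B v v := by
    simp only [map_sub, map_smul, LinearMap.map_smulₛₗ, LinearMap.sub_apply, LinearMap.smul_apply,
      smul_eq_mul, huv, hvu, Complex.normSq_eq_conj_mul_self]
    ring
  have hnonpos := hf (f v • u - f u • v) (by simp [mul_comm])
  rw [hnorm, Complex.add_re, Complex.re_ofReal_mul, Complex.re_ofReal_mul] at hnonpos
  have hpos := mul_pos (Complex.normSq_pos.mpr hfv) hu
  have hnonneg := mul_nonneg (Complex.normSq_nonneg (f u)) hv.le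
  linarith

section Eigenlines

variable {K M : Type*} [Field K] [AddCommGroup M] [Module K M]

lemma exists_eq_smul_of_mem_closure {S : Set (M ≃ₗ[K] M)} {v : M}
    (hS : ∀ g ∈ S, ∃ c : K, g v = c • v) {g : M ≃ₗ[K] M} (hg : g ∈ Subgroup.closure S) :
    ∃ c : K, g v = c • v := by
  induction hg using Subgroup.closure_induction with
  | mem g hg => exact hS g hg
  | one => exact ⟨1, (one_smul K v).symm⟩
  | mul g h _ _ ihg ihh =>
    obtain ⟨a, ha⟩ := ihg
    obtain ⟨b, hb⟩ := ihh
    exact ⟨b * a, by rw [LinearEquiv.mul_apply, hb, map_smul, ha, mul_smul]⟩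
  | inv g _ ih =>
    obtain ⟨c, hc⟩ := ih
    have hv : v = c • g⁻¹ v := by rw [← map_smul, ← hc]; exact (g.symm_apply_apply v).symm
    obtain rfl | hc0 := eq_or_ne c 0
    · rw [zero_smul] at hv
      exact ⟨0, by rw [hv, map_zero, smul_zero]⟩
    · exact ⟨c⁻¹, (inv_smul_eq_iff₀ hc0).mpr hv |>.symm⟩

lemma exists_eq_smul_of_disjoint_ker {p : Submodule K M} {f : M →ₗ[K] K}
    (hf : Disjoint p f.ker) {x y : M} (hx : x ∈ p) (hx0 : x ≠ 0) (hy : y ∈ p)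
    (hy0 : y ≠ 0) : ∃ c : K, c ≠ 0 ∧ x = c • y := by
  rw [Submodule.disjoint_def] at hf
  have hfx : f x ≠ 0 := fun h => hx0 (hf x hx h)
  have hfy : f y ≠ 0 := fun h => hy0 (hf y hy h)
  refine ⟨f x / f y, div_ne_zero hfx hfy, sub_eq_zero.mp (hf _ ?_ ?_)⟩
  · exact sub_mem hx (p.smul_mem _ hy)
  · rw [LinearMap.mem_ker, map_sub, map_smul, smul_eq_mul, div_mul_cancel₀ _ hfy, sub_self]

end Eigenlines

/-! ### The constants `ω`, `θ`, `ξ` -/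

lemma ω_eq : ω = -1 / 2 + (√3 / 2 : ℝ) * Complex.I := by
  have harg : 2 * (Real.pi : ℂ) * Complex.I / 3 = (Real.pi - Real.pi / 3 : ℝ) * Complex.I := by
    push_cast
    ring
  rw [ω, harg, Complex.exp_mul_I, ← Complex.ofReal_cos, ← Complex.ofReal_sin, Real.cos_pi_sub,
    Real.sin_pi_sub, Real.cos_pi_div_three, Real.sin_pi_div_three]
  push_cast
  ring

lemma ξ_eq : ξ = (√3 / 2 : ℝ) - 1 / 2 * Complex.I := by
  have harg : -((Real.pi : ℂ) * Complex.I) / 6 = (-(Real.pi / 6) : ℝ) * Complex.I := by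
    push_cast
    ring
  rw [ξ, harg, Complex.exp_mul_I, ← Complex.ofReal_cos, ← Complex.ofReal_sin, Real.cos_neg,
    Real.sin_neg, Real.cos_pi_div_six, Real.sin_pi_div_six]
  push_cast
  ring

lemma ofReal_sqrt_three_sq : ((√3 : ℝ) : ℂ) ^ 2 = 3 := by
  rw [← Complex.ofReal_pow, Real.sq_sqrt (by norm_num)]
  norm_num

lemma ω_sq : ω ^ 2 = -1 - ω := by
  rw [ω_eq]
  push_cast
  linear_combination (1 / 4) * Complex.I ^ 2 * ofReal_sqrt_three_sq + (3 / 4) * Complex.I_sq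

lemma conj_ω : conj ω = -1 - ω := by
  rw [ω_eq]
  simp only [map_add, map_neg, map_mul, map_div₀, map_one, map_ofNat, Complex.conj_ofReal,
    Complex.conj_I]
  ring

lemma θ_eq : θ = 1 + 2 * ω := by
  rw [θ, conj_ω]
  ring

lemma θ_sq : θ ^ 2 = -3 := by
  rw [θ_eq]
  linear_combination 4 * ω_sq

lemma θ_ne_zero : θ ≠ 0 := by
  intro h
  simpa [h] using θ_sq

lemma qc_eq : qc = ω - 1 := by
  rw [qc, θ_eq]
  linear_combination (-1 - 2 * ω) * ω_sq + 2 * ω_sq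

lemma ξ_sq : ξ ^ 2 = -ω := by
  rw [ξ_eq, ω_eq]
  push_cast
  linear_combination (1 / 4) * ofReal_sqrt_three_sq + (1 / 4) * Complex.I_sq

lemma conj_ξ_mul_self : conj ξ * ξ = 1 := by
  rw [ξ_eq]
  simp only [map_sub, map_mul, map_div₀, map_one, map_ofNat, Complex.conj_ofReal, Complex.conj_I]
  push_cast
  linear_combination (1 / 4) * ofReal_sqrt_three_sq - (1 / 4) * Complex.I_sq

lemma two_add_ω_eq : 2 + ω = √3 * conj ξ := by
  rw [ξ_eq, ω_eq]
  simp only [map_sub, map_mul, map_div₀, map_one, map_ofNat, Complex.conj_ofReal, Complex.conj_I]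
  push_cast
  linear_combination (-1 / 2) * ofReal_sqrt_three_sq

/-! ### The Hermitian form -/

/-- `herm` as a bundled sesquilinear form. -/
def hermForm : V →ₗ⋆[ℂ] V →ₗ[ℂ] ℂ :=
  LinearMap.mk₂'ₛₗ (starRingEnd ℂ) (RingHom.id ℂ) herm
    (fun u u' v => by
      simp only [herm, Pi.add_apply, map_add, add_mul, Finset.sum_add_distrib]; ring)
    (fun c u v => by
      simp only [herm, Pi.smul_apply, smul_eq_mul, map_mul, mul_assoc, ← Finset.mul_sum]; ring)
    (fun u v v' => by simp only [herm, Pi.add_apply, mul_add, Finset.sum_add_distrib]; ring)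
    (fun c u v => by
      simp only [herm, Pi.smul_apply, smul_eq_mul, RingHom.id_apply, mul_left_comm _ c,
        ← Finset.mul_sum]; ring)

@[simp]
lemma hermForm_apply (u v : V) : hermForm u v = herm u v := rfl

lemma hermForm_isSymm : hermForm.IsSymm where
  eq u v := by
    simp only [hermForm_apply, herm, map_add, map_neg, map_sum, map_mul, Complex.conj_conj]
    simp only [mul_comm, mul_left_comm, add_right_comm]
    ring

lemma hermForm_separatingRight : hermForm.SeparatingRight := by
  intro v hv
  have hE8 (j : Fin 12) : v (Fin.castLE (by norm_num) j) = 0 := by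
    have h12 : 12 ≠ Fin.castLE (show 12 ≤ 14 by norm_num) j := Fin.ne_of_gt j.isLt
    have h13 : 13 ≠ Fin.castLE (show 12 ≤ 14 by norm_num) j :=
      Fin.ne_of_gt (j.isLt.trans (Nat.lt_succ_self 12))
    simpa [herm, Pi.single_apply, h12, h13] using
      hv (Pi.single (Fin.castLE (by norm_num) j) 1)
  have h12 : v 12 = 0 := by
    simpa [herm, hE8, θ_ne_zero] using hv (Pi.single 13 1)
  have h13 : v 13 = 0 := by
    simpa [herm, hE8, θ_ne_zero] using hv (Pi.single 12 1)
  funext i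
  exact Fin.addCases (m := 12) (n := 2) (motive := fun i => v i = 0) hE8
    (Fin.forall_fin_two.mpr ⟨h12, h13⟩) i

lemma herm_self_re_nonpos_of_apply_thirteen_eq_zero {v : V} (hv : v 13 = 0) :
    (herm v v).re ≤ 0 := by
  have hherm : herm v v = -((∑ i : Fin 12,
      Complex.normSq (v (Fin.castLE (by norm_num) i)) : ℝ) : ℂ) := by
    simp [herm, hv, Complex.normSq_eq_conj_mul_self]
  rw [hherm, Complex.neg_re, Complex.ofReal_re, neg_nonpos]
  exact Finset.sum_nonneg fun i _ => Complex.normSq_nonneg _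

lemma herm_ne_zero_of_pos {u v : V} (hu : 0 < (herm u u).re) (hv : 0 < (herm v v).re) :
    herm u v ≠ 0 :=
  apply_ne_zero_of_pos_of_nonpos_on_ker hermForm_isSymm (LinearMap.proj 13)
    (fun _ => herm_self_re_nonpos_of_apply_thirteen_eq_zero) hu hv

lemma ne_zero_of_herm_self_re_pos {v : V} (hv : 0 < (herm v v).re) : v ≠ 0 := by
  rintro rfl
  simp [herm] at hv

/-! ### Eisenstein integers -/

/-- An exact model of the Eisenstein integers, with decidable equality: the quadratic algebra over
`ℤ` generated by an element with square `-1 - x`. -/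
abbrev Eis : Type := QuadraticAlgebra ℤ (-1) (-1)

/-- The embedding of the model `Eis` into `ℂ` that sends its generator to `ω`. -/
def toComplex : Eis →ₐ[ℤ] ℂ :=
  QuadraticAlgebra.lift ⟨ω, by simp only [neg_smul, one_smul]; linear_combination ω_sq⟩

lemma toComplex_apply (p : Eis) : toComplex p = p.re + p.im * ω := by
  simp [toComplex, QuadraticAlgebra.lift]

@[simp]
lemma toComplex_ofNat (n : ℕ) [n.AtLeastTwo] : toComplex ofNat(n) = ofNat(n) :=
  map_ofNat toComplex n

lemma toComplex_star (p : Eis) : toComplex (star p) = conj (toComplex p) := by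
  simp only [toComplex_apply, QuadraticAlgebra.re_star, QuadraticAlgebra.im_star, map_add, map_mul,
    map_intCast, conj_ω]
  push_cast
  ring

/-- The Eisenstein integers `ℰ = ℤ[ω]` as a subalgebra of `ℂ`. -/
def ℰ : Subalgebra ℤ ℂ := toComplex.range

lemma mem_ℰ {z : ℂ} : z ∈ ℰ ↔ EisP z := by
  constructor
  · rintro ⟨p, rfl⟩
    exact ⟨p.re, p.im, toComplex_apply p⟩
  · rintro ⟨a, b, rfl⟩
    exact ⟨⟨a, b⟩, toComplex_apply _⟩

lemma ω_mem_ℰ : ω ∈ ℰ := mem_ℰ.mpr ⟨0, 1, by simp⟩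

/-- The ideal `θℰ` of `ℰ`, as an `ℰ`-submodule of `ℂ`. -/
def θIdeal : Submodule ℰ ℂ := Submodule.span ℰ {θ}

lemma mem_θIdeal {z : ℂ} : z ∈ θIdeal ↔ ∃ a b : ℤ, z = θ * (a + b * ω) := by
  rw [θIdeal, Submodule.mem_span_singleton]
  constructor
  · rintro ⟨⟨c, hc⟩, rfl⟩
    obtain ⟨a, b, rfl⟩ := mem_ℰ.mp hc
    exact ⟨a, b, mul_comm _ _⟩
  · rintro ⟨a, b, rfl⟩
    exact ⟨⟨a + b * ω, mem_ℰ.mpr ⟨a, b, rfl⟩⟩, mul_comm _ _⟩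

lemma mul_mem_θIdeal {c z : ℂ} (hc : c ∈ ℰ) (hz : z ∈ θIdeal) : c * z ∈ θIdeal :=
  θIdeal.smul_mem ⟨c, hc⟩ hz

lemma θIdeal_le : ∀ z ∈ θIdeal, z ∈ ℰ := by
  intro z hz
  obtain ⟨a, b, rfl⟩ := mem_θIdeal.mp hz
  exact mem_ℰ.mpr ⟨a - 2 * b, 2 * a - b, by
    push_cast
    linear_combination (a + b * ω) * θ_eq + 2 * b * ω_sq⟩

lemma mul_three_mem_θIdeal {z : ℂ} (hz : z ∈ ℰ) : z * 3 ∈ θIdeal :=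
  mul_mem_θIdeal hz <|
    mem_θIdeal.mpr ⟨-1, -2, by push_cast; linear_combination θ_sq - θ * θ_eq⟩

lemma qc_mem_θIdeal : qc ∈ θIdeal :=
  mem_θIdeal.mpr ⟨1, 1, by rw [qc]; push_cast; linear_combination -θ * ω_sq⟩

-- `qc` and `θ` are associates: `qc * (-ω) = θ`.
lemma exists_mul_qc_of_mem_θIdeal {z : ℂ} (hz : z ∈ θIdeal) : ∃ c ∈ ℰ, c * qc = z := by
  obtain ⟨c, rfl⟩ := Submodule.mem_span_singleton.mp hz
  refine ⟨-ω * c, mul_mem (neg_mem ω_mem_ℰ) c.2, ?_⟩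
  rw [Algebra.smul_def, qc_eq, θ_eq]
  change _ = (c : ℂ) * _
  linear_combination -(c : ℂ) * ω_sq

lemma toComplex_mem_ℰ (p : Eis) : toComplex p ∈ ℰ := ⟨p, rfl⟩

/-- Reduction modulo `θ`: since `ω ≡ 1`, the residue field `ℰ / θℰ` is `𝔽₃`. -/
def residue : Eis →ₐ[ℤ] ZMod 3 := QuadraticAlgebra.lift ⟨1, by decide⟩

lemma residue_apply (p : Eis) : residue p = ((p.re + p.im : ℤ) : ZMod 3) := by
  simp [residue, QuadraticAlgebra.lift]

lemma toComplex_mem_θIdeal {p : Eis} (hp : residue p = 0) : toComplex p ∈ θIdeal := by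
  rw [residue_apply, ZMod.intCast_zmod_eq_zero_iff_dvd] at hp
  obtain ⟨n, hn⟩ := hp
  have hn' : (p.re + p.im : ℂ) = 3 * n := mod_cast hn
  have hdecomp : toComplex p = (n : ℂ) * 3 + (p.im : ℂ) * qc := by
    rw [toComplex_apply, qc_eq]
    linear_combination hn'
  rw [hdecomp]
  exact add_mem (mul_three_mem_θIdeal (intCast_mem ℰ n))
    (mul_mem_θIdeal (intCast_mem ℰ p.im) qc_mem_θIdeal)

/-! ### Exact coordinates of the 26 roots -/

/-- The generator of `Eis`, the model of `ω`. -/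
def ωE : Eis := ⟨0, 1⟩

/-- The model of `θ`. -/
def θE : Eis := 1 + 2 * ωE

/-- The model of `qc`. -/
def qE : Eis := ωE - 1

lemma toComplex_ωE : toComplex ωE = ω := by simp [toComplex_apply, ωE]

lemma toComplex_θE : toComplex θE = θ := by simp [θE, toComplex_ωE, θ_eq]

lemma toComplex_qE : toComplex qE = qc := by simp [qE, toComplex_ωE, qc_eq]

/-- The vector of `V` with coordinates given in the model `Eis`. -/
def toV (u : Fin 14 → Eis) : V := toComplex ∘ u

lemma toComplex_comp_vecCons {n : ℕ} (p : Eis) (u : Fin n → Eis) :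
    toComplex ∘ Matrix.vecCons p u = Matrix.vecCons (toComplex p) (toComplex ∘ u) :=
  Fin.comp_cons toComplex p u

/-- The form `herm` in the model `Eis`. -/
def hermE (u v : Fin 14 → Eis) : Eis :=
  -(∑ i : Fin 12, star (u (Fin.castLE (by norm_num) i)) * v (Fin.castLE (by norm_num) i)) +
    star (u 12) * star θE * v 13 + star (u 13) * θE * v 12

lemma herm_toV (u v : Fin 14 → Eis) : herm (toV u) (toV v) = toComplex (hermE u v) := by
  simp only [herm, toV, hermE, Function.comp_apply, map_add, map_neg, map_sum, map_mul,
    toComplex_star, toComplex_θE]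

/-- The coordinates of the point roots in the model `Eis`. -/
def ptE : Fin 13 → Fin 14 → Eis :=
  ![![0, 0, 0, 0, 0, 0, 0, 0, 0, 0, 0, 0, 1, ωE ^ 2],
    ![qE, 0, 0, 0, 0, 0, 0, 0, 0, 0, 0, 0, 0, 0],
    ![0, 0, 0, 0, qE, 0, 0, 0, 0, 0, 0, 0, 0, 0],
    ![0, 0, 0, 0, 0, 0, 0, 0, qE, 0, 0, 0, 0, 0],
    ![0, qE, 0, 0, 0, 0, 0, 0, 0, 0, 0, 0, 0, 0],
    ![0, 0, 0, 0, 0, qE, 0, 0, 0, 0, 0, 0, 0, 0],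
    ![0, 0, 0, 0, 0, 0, 0, 0, 0, qE, 0, 0, 0, 0],
    ![0, 0, 0, 0, 0, 0, 0, qE, 0, 0, 0, qE, ωE, ωE ^ 2],
    ![0, 0, 0, qE, 0, 0, 0, 0, 0, 0, 0, qE, ωE, ωE ^ 2],
    ![0, 0, 0, qE, 0, 0, 0, qE, 0, 0, 0, 0, ωE, ωE ^ 2],
    ![0, 0, 0, qE, 0, 0, -qE, qE, 0, 0, -qE, qE, 2 * ωE, 2 * ωE ^ 2],
    ![0, 0, -qE, qE, 0, 0, 0, qE, 0, 0, -qE, qE, 2 * ωE, 2 * ωE ^ 2],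
    ![0, 0, -qE, qE, 0, 0, -qE, qE, 0, 0, 0, qE, 2 * ωE, 2 * ωE ^ 2]]

/-- The coordinates of the line roots in the model `Eis`. -/
def lnrE : Fin 13 → Fin 14 → Eis :=
  ![![0, 1, 1, -2, 0, 1, 1, -2, 0, 1, 1, -2, -2 + ωE, -θE],
    ![1, 0, 1, -1, 0, 0, 0, 0, 0, 0, 0, 0, -1, 0],
    ![0, 0, 0, 0, 1, 0, 1, -1, 0, 0, 0, 0, -1, 0],
    ![0, 0, 0, 0, 0, 0, 0, 0, 1, 0, 1, -1, -1, 0],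
    ![1, 1, -1, 0, 0, 0, 0, 0, 0, 0, 0, 0, 0, 0],
    ![0, 0, 0, 0, 1, 1, -1, 0, 0, 0, 0, 0, 0, 0],
    ![0, 0, 0, 0, 0, 0, 0, 0, 1, 1, -1, 0, 0, 0],
    ![0, 1, 1, 1, 0, 0, 0, 0, 0, 0, 0, 0, 0, 0],
    ![0, 0, 0, 0, 0, 1, 1, 1, 0, 0, 0, 0, 0, 0],
    ![0, 0, 0, 0, 0, 0, 0, 0, 0, 1, 1, 1, 0, 0],
    ![0, 1, 1, -2, 1, 0, 1, -1, 1, 0, 1, -1, qE, -θE],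
    ![1, 0, 1, -1, 0, 1, 1, -2, 1, 0, 1, -1, qE, -θE],
    ![1, 0, 1, -1, 1, 0, 1, -1, 0, 1, 1, -2, qE, -θE]]

lemma pt_eq_toV (i : Fin 13) : pt i = toV (ptE i) := by
  fin_cases i <;>
    simp [pt, ptE, toV, rA, rC1, rC2, rC3, rE1, rE2, rE3, rA1, rA2, rA3, rG1, rG2, rG3,
      toComplex_ωE, toComplex_qE, toComplex_comp_vecCons,
      eq_iff_true_of_subsingleton]

lemma lnr_eq_toV (i : Fin 13) : lnr i = toV (lnrE i) := by
  fin_cases i <;>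
    simp [lnr, lnrE, toV, rF, rB1, rB2, rB3, rD1, rD2, rD3, rF1, rF2, rF3, rZ1, rZ2, rZ3,
      toComplex_ωE, toComplex_qE, toComplex_θE, toComplex_comp_vecCons,
      eq_iff_true_of_subsingleton]

/-! ### The Gram matrix of the 26 roots -/

/-- The labelling of the points of `P²(𝔽₃)` by `ℤ/13` for which the shift `m ↦ m + 1` is induced by
a Singer cycle. -/
def singerPoint : Equiv.Perm (Fin 13) where
  toFun := ![0, 2, 10, 7, 4, 8, 12, 1, 3, 9, 6, 11, 5]
  invFun := ![0, 7, 1, 8, 4, 12, 10, 3, 5, 9, 2, 11, 6]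
  left_inv := by decide
  right_inv := by decide

/-- The labelling of the lines of `P²(𝔽₃)` by `ℤ/13` matching `singerPoint`: the points on line `n`
are the `m` for which `n - m` lies in the perfect difference set `{0, 1, 3, 9}`. -/
def singerLine : Equiv.Perm (Fin 13) where
  toFun := ![0, 2, 5, 1, 10, 7, 9, 4, 11, 3, 12, 6, 8]
  invFun := ![0, 3, 1, 9, 7, 2, 11, 5, 12, 6, 4, 8, 10]
  left_inv := by decide
  right_inv := by decide

lemma hermE_ptE : ∀ i j, hermE (ptE i) (ptE j) = if i = j then -3 else 0 := by decide +kernel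

lemma hermE_lnrE : ∀ i j, hermE (lnrE i) (lnrE j) = if i = j then -3 else 0 := by decide +kernel

lemma hermE_ptE_lnrE : ∀ m n, hermE (ptE (singerPoint m)) (lnrE (singerLine n)) =
    if n - m ∈ ({0, 1, 3, 9} : Finset (Fin 13)) then 2 + ωE else 0 := by
  decide +kernel

lemma herm_pt_pt (i j : Fin 13) : herm (pt i) (pt j) = if i = j then -3 else 0 := by
  rw [pt_eq_toV, pt_eq_toV, herm_toV, hermE_ptE]
  split_ifs <;> simp

lemma herm_lnr_lnr (i j : Fin 13) : herm (lnr i) (lnr j) = if i = j then -3 else 0 := by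
  rw [lnr_eq_toV, lnr_eq_toV, herm_toV, hermE_lnrE]
  split_ifs <;> simp

lemma herm_pt_singerPoint_lnr_singerLine (m n : Fin 13) :
    herm (pt (singerPoint m)) (lnr (singerLine n)) =
      if n - m ∈ ({0, 1, 3, 9} : Finset (Fin 13)) then 2 + ω else 0 := by
  rw [pt_eq_toV, lnr_eq_toV, herm_toV, hermE_ptE_lnrE]
  split_ifs <;> simp [toComplex_ωE]

lemma pt_injective : Function.Injective pt :=
  injective_of_gram_eq_diagonal (B := hermForm) (by norm_num) herm_pt_pt

lemma lnr_injective : Function.Injective lnr :=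
  injective_of_gram_eq_diagonal (B := hermForm) (by norm_num) herm_lnr_lnr

/-! ### The lattice is spanned by the 26 roots -/

/-- The `E₈` lattice `inE8` as an `ℰ`-module, cut out by the parity checks of the tetracode
modulo `θ`. -/
def E8Lattice : Submodule ℰ (Fin 4 → ℂ) where
  carrier := {w | (∀ i, w i ∈ ℰ) ∧ w 0 + w 1 - w 2 ∈ θIdeal ∧ w 1 + w 2 + w 3 ∈ θIdeal}
  zero_mem' := by simp [zero_mem]
  add_mem' := by
    rintro w w' ⟨hw, hw₁, hw₂⟩ ⟨hw', hw₁', hw₂'⟩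
    refine ⟨fun i => add_mem (hw i) (hw' i), ?_, ?_⟩
    · convert add_mem hw₁ hw₁' using 1
      simp only [Pi.add_apply]
      ring
    · convert add_mem hw₂ hw₂' using 1
      simp only [Pi.add_apply]
      ring
  smul_mem' := by
    rintro c w ⟨hw, hw₁, hw₂⟩
    refine ⟨fun i => mul_mem c.2 (hw i), ?_, ?_⟩
    · convert θIdeal.smul_mem c hw₁ using 1
      simp only [Pi.smul_apply, smul_add, smul_sub]
    · convert θIdeal.smul_mem c hw₂ using 1
      simp only [Pi.smul_apply, smul_add]

lemma mem_E8Lattice {w : Fin 4 → ℂ} : w ∈ E8Lattice ↔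
    (∀ i, w i ∈ ℰ) ∧ w 0 + w 1 - w 2 ∈ θIdeal ∧ w 1 + w 2 + w 3 ∈ θIdeal :=
  Iff.rfl

lemma exists_int_sub_mem_θIdeal {z : ℂ} (hz : z ∈ ℰ) : ∃ n : ℤ, z - n ∈ θIdeal := by
  obtain ⟨p, rfl⟩ := hz
  refine ⟨p.re + p.im, ?_⟩
  convert toComplex_mem_θIdeal (p := p - (p.re + p.im : ℤ)) (by simp [residue_apply]) using 1
  simp

lemma inE8_iff_mem_E8Lattice {w : Fin 4 → ℂ} : inE8 w ↔ w ∈ E8Lattice := by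
  simp only [inE8, ← mem_θIdeal, ← mem_ℰ, mem_E8Lattice]
  refine and_congr_right fun hw => ⟨?_, ?_⟩
  · rintro ⟨s, t, hst⟩
    have h0 : w 0 - s ∈ θIdeal := by simpa [tet1, tet2] using hst 0
    have h1 : w 1 - (s + t) ∈ θIdeal := by simpa [tet1, tet2] using hst 1
    have h2 : w 2 - (-s + t) ∈ θIdeal := by simpa [tet1, tet2] using hst 2
    have h3 : w 3 - t ∈ θIdeal := by simpa [tet1, tet2] using hst 3
    constructor
    · convert add_mem (sub_mem (add_mem h0 h1) h2) (mul_three_mem_θIdeal (intCast_mem ℰ s)) using 1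
      ring
    · convert add_mem (add_mem (add_mem h1 h2) h3) (mul_three_mem_θIdeal (intCast_mem ℰ t)) using 1
      ring
  · rintro ⟨h₁, h₂⟩
    obtain ⟨s, hs⟩ := exists_int_sub_mem_θIdeal (hw 0)
    obtain ⟨t, ht⟩ := exists_int_sub_mem_θIdeal (hw 3)
    refine ⟨s, t, fun i => ?_⟩
    have h1 : w 1 - (s + t) ∈ θIdeal := by
      convert sub_mem (add_mem (add_mem (mul_three_mem_θIdeal (hw 1)) hs) ht) (add_mem h₁ h₂)
        using 1
      ring
    have h2 : w 2 - (-s + t) ∈ θIdeal := by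
      convert sub_mem (sub_mem (add_mem (mul_three_mem_θIdeal (hw 2)) ht) hs) (sub_mem h₂ h₁)
        using 1
      ring
    fin_cases i
    · simpa [tet1, tet2] using hs
    · simpa [tet1, tet2] using h1
    · simpa [tet1, tet2] using h2
    · simpa [tet1, tet2] using ht

/-- The index of the `i`-th coordinate of the `k`-th `E₈` summand. -/
def blockIndex (k : Fin 3) (i : Fin 4) : Fin 14 := ⟨4 * k + i, by omega⟩

/-- The `k`-th `E₈` component of a vector. -/
def blockProj (k : Fin 3) : V →ₗ[ℰ] Fin 4 → ℂ := LinearMap.funLeft ℰ ℂ (blockIndex k)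

lemma blockProj_apply (k : Fin 3) (v : V) (i : Fin 4) : blockProj k v i = v (blockIndex k i) := rfl

/-- The inclusion of the `k`-th `E₈` summand. -/
def blockIncl (k : Fin 3) : (Fin 4 → ℂ) →ₗ[ℰ] V :=
  ∑ i, LinearMap.single ℰ (fun _ => ℂ) (blockIndex k i) ∘ₗ LinearMap.proj i

lemma blockIncl_apply (k : Fin 3) (w : Fin 4 → ℂ) : blockIncl k w =
    ![![w 0, w 1, w 2, w 3, 0, 0, 0, 0, 0, 0, 0, 0, 0, 0],
      ![0, 0, 0, 0, w 0, w 1, w 2, w 3, 0, 0, 0, 0, 0, 0],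
      ![0, 0, 0, 0, 0, 0, 0, 0, w 0, w 1, w 2, w 3, 0, 0]] k := by
  ext i
  fin_cases k <;> fin_cases i <;> simp [blockIncl, blockIndex, Fin.sum_univ_succ]

/-- The lattice `L = 3E₈ ⊕ H` as an `ℰ`-module. -/
def lattice : Submodule ℰ V where
  carrier := Lset
  zero_mem' := ⟨fun _ => inE8_iff_mem_E8Lattice.mpr E8Lattice.zero_mem,
    mem_ℰ.mp (zero_mem ℰ), mem_ℰ.mp (zero_mem ℰ)⟩
  add_mem' := fun ⟨hu, hu12, hu13⟩ ⟨hv, hv12, hv13⟩ =>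
    ⟨fun k => inE8_iff_mem_E8Lattice.mpr (E8Lattice.add_mem
        (inE8_iff_mem_E8Lattice.mp (hu k)) (inE8_iff_mem_E8Lattice.mp (hv k))),
      mem_ℰ.mp (add_mem (mem_ℰ.mpr hu12) (mem_ℰ.mpr hv12)),
      mem_ℰ.mp (add_mem (mem_ℰ.mpr hu13) (mem_ℰ.mpr hv13))⟩
  smul_mem' := fun c _ ⟨hv, hv12, hv13⟩ =>
    ⟨fun k => inE8_iff_mem_E8Lattice.mpr
        (E8Lattice.smul_mem c (inE8_iff_mem_E8Lattice.mp (hv k))),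
      mem_ℰ.mp (mul_mem c.2 (mem_ℰ.mpr hv12)), mem_ℰ.mp (mul_mem c.2 (mem_ℰ.mpr hv13))⟩

lemma mem_lattice {v : V} :
    v ∈ lattice ↔ (∀ k, blockProj k v ∈ E8Lattice) ∧ v 12 ∈ ℰ ∧ v 13 ∈ ℰ := by
  simp only [mem_ℰ, ← inE8_iff_mem_E8Lattice]
  rfl

lemma E8Lattice_le_span :
    E8Lattice ≤ Submodule.span ℰ
      {![qc, 0, 0, 0], ![0, qc, 0, 0], ![1, 1, -1, 0], ![0, 1, 1, 1]} := by
  rintro w ⟨hw, h₁, h₂⟩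
  obtain ⟨c, hc, hcw⟩ := exists_mul_qc_of_mem_θIdeal
    (add_mem (sub_mem h₁ h₂) (mul_three_mem_θIdeal (hw 2)))
  obtain ⟨e, he, hew⟩ := exists_mul_qc_of_mem_θIdeal (sub_mem h₂ (mul_three_mem_θIdeal (hw 3)))
  have hw_eq : w = (⟨c, hc⟩ : ℰ) • ![qc, 0, 0, 0] + (⟨e, he⟩ : ℰ) • ![0, qc, 0, 0] +
      (⟨w 3 - w 2, sub_mem (hw 3) (hw 2)⟩ : ℰ) • ![1, 1, -1, 0] +
      (⟨w 3, hw 3⟩ : ℰ) • ![0, 1, 1, 1] := by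
    ext i
    fin_cases i <;> simp [Subalgebra.smul_def, hcw, hew] <;> ring
  rw [hw_eq]
  refine add_mem (add_mem (add_mem ?_ ?_) ?_) ?_ <;>
    exact Submodule.smul_mem _ _ (Submodule.subset_span (by simp))

/-- The 26 roots of `D`, point roots first. -/
def root : Fin 13 ⊕ Fin 13 → V := Sum.elim pt lnr

/-- The `ℰ`-span of the 26 roots. -/
def rootSpan : Submodule ℰ V := Submodule.span ℰ (Set.range root)

lemma pt_mem_rootSpan (i : Fin 13) : pt i ∈ rootSpan := Submodule.subset_span ⟨Sum.inl i, rfl⟩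

lemma lnr_mem_rootSpan (i : Fin 13) : lnr i ∈ rootSpan := Submodule.subset_span ⟨Sum.inr i, rfl⟩

lemma toV_mem_lattice {u : Fin 14 → Eis}
    (hu : ∀ k, residue (u (blockIndex k 0) + u (blockIndex k 1) - u (blockIndex k 2)) = 0 ∧
      residue (u (blockIndex k 1) + u (blockIndex k 2) + u (blockIndex k 3)) = 0) :
    toV u ∈ lattice := by
  refine mem_lattice.mpr ⟨fun k => ⟨fun i => toComplex_mem_ℰ _, ?_, ?_⟩, toComplex_mem_ℰ _,
    toComplex_mem_ℰ _⟩
  · simpa only [map_add, map_sub, blockProj_apply, toV, Function.comp_apply]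
      using toComplex_mem_θIdeal (hu k).1
  · simpa only [map_add, blockProj_apply, toV, Function.comp_apply]
      using toComplex_mem_θIdeal (hu k).2

lemma root_mem_lattice (k : Fin 13 ⊕ Fin 13) : root k ∈ lattice := by
  rcases k with i | i
  · rw [root, Sum.elim_inl, pt_eq_toV]
    exact toV_mem_lattice (by revert i; decide +kernel)
  · rw [root, Sum.elim_inr, lnr_eq_toV]
    exact toV_mem_lattice (by revert i; decide +kernel)

lemma blockIncl_mem_range_root (k : Fin 3) {w : Fin 4 → ℂ}
    (hw : w ∈ ({![qc, 0, 0, 0], ![0, qc, 0, 0], ![1, 1, -1, 0], ![0, 1, 1, 1]} : Set _)) :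
    blockIncl k w ∈ Set.range root := by
  obtain rfl | rfl | rfl | rfl := hw
  · exact ⟨.inl (![1, 2, 3] k), by
      fin_cases k <;> simp [root, blockIncl_apply, pt, rC1, rC2, rC3]⟩
  · exact ⟨.inl (![4, 5, 6] k), by
      fin_cases k <;> simp [root, blockIncl_apply, pt, rE1, rE2, rE3]⟩
  · exact ⟨.inr (![4, 5, 6] k), by
      fin_cases k <;> simp [root, blockIncl_apply, lnr, rD1, rD2, rD3]⟩
  · exact ⟨.inr (![7, 8, 9] k), by
      fin_cases k <;> simp [root, blockIncl_apply, lnr, rF1, rF2, rF3]⟩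

lemma blockIncl_mem_rootSpan (k : Fin 3) {w : Fin 4 → ℂ} (hw : w ∈ E8Lattice) :
    blockIncl k w ∈ rootSpan := by
  suffices E8Lattice ≤ rootSpan.comap (blockIncl k) from this hw
  exact E8Lattice_le_span.trans <| Submodule.span_le.mpr fun w hw =>
    Submodule.subset_span (blockIncl_mem_range_root k hw)

lemma mem_rootSpan_of_apply_eq_zero {v : V} (hv : v ∈ lattice) (h12 : v 12 = 0) (h13 : v 13 = 0) :
    v ∈ rootSpan := by
  have hdecomp : v = ∑ k, blockIncl k (blockProj k v) := by
    ext i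
    fin_cases i <;>
      simp [Fin.sum_univ_succ, blockIncl_apply, blockProj_apply, blockIndex, h12, h13]
  rw [hdecomp]
  exact sum_mem fun k _ => blockIncl_mem_rootSpan k ((mem_lattice.mp hv).1 k)

lemma lattice_eq_rootSpan : lattice = rootSpan := by
  refine le_antisymm (fun v hv => ?_)
    (Submodule.span_le.mpr (Set.range_subset_iff.mpr root_mem_lattice))
  obtain ⟨-, hv12, hv13⟩ := mem_lattice.mp hv
  let a : ℰ := ⟨ω * v 13, mul_mem ω_mem_ℰ hv13⟩
  let b : ℰ := ⟨ω * v 13 - v 12, sub_mem (mul_mem ω_mem_ℰ hv13) hv12⟩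
  have hreduce : v - a • pt 0 - b • lnr 1 ∈ rootSpan := by
    refine mem_rootSpan_of_apply_eq_zero ?_ ?_ ?_
    · exact sub_mem (sub_mem hv (lattice.smul_mem a (root_mem_lattice (Sum.inl 0))))
        (lattice.smul_mem b (root_mem_lattice (Sum.inr 1)))
    · simp only [Pi.sub_apply, Pi.smul_apply, Subalgebra.smul_def, smul_eq_mul, a, b, pt, lnr, rA,
        rB1, Matrix.cons_val]
      ring
    · simp only [Pi.sub_apply, Pi.smul_apply, Subalgebra.smul_def, smul_eq_mul, a, b, pt, lnr, rA,
        rB1, Matrix.cons_val]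
      linear_combination (v 13 - ω * v 13) * ω_sq
  convert add_mem (add_mem hreduce (rootSpan.smul_mem b (lnr_mem_rootSpan 1)))
    (rootSpan.smul_mem a (pt_mem_rootSpan 0)) using 1
  abel

lemma mem_lattice_of_forall_mem_θIdeal {v : V} (hv : ∀ i, v i ∈ θIdeal) : v ∈ lattice :=
  mem_lattice.mpr ⟨fun _ => ⟨fun _ => θIdeal_le _ (hv _), sub_mem (add_mem (hv _) (hv _)) (hv _),
    add_mem (add_mem (hv _) (hv _)) (hv _)⟩, θIdeal_le _ (hv _), θIdeal_le _ (hv _)⟩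

lemma span_range_root : Submodule.span ℂ (Set.range root) = ⊤ := by
  have hsingle_θ (i : Fin 14) : Pi.single i θ ∈ Submodule.span ℂ (Set.range root) := by
    refine Submodule.span_le_restrictScalars ℰ ℂ _ (lattice_eq_rootSpan.le ?_)
    refine mem_lattice_of_forall_mem_θIdeal fun j => ?_
    obtain rfl | hij := eq_or_ne j i
    · rw [Pi.single_eq_same]
      exact Submodule.mem_span_singleton_self θ
    · simp only [Pi.single_eq_of_ne hij, zero_mem]
  rw [eq_top_iff, ← (Pi.basisFun ℂ (Fin 14)).span_eq, Submodule.span_le]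
  rintro _ ⟨i, rfl⟩
  have hbasis : Pi.basisFun ℂ (Fin 14) i = θ⁻¹ • Pi.single i θ := by
    rw [Pi.basisFun_apply, ← Pi.single_smul, smul_eq_mul, inv_mul_cancel₀ θ_ne_zero]
  exact hbasis ▸ Submodule.smul_mem _ _ (hsingle_θ i)

/-! ### The Singer cycle -/

lemma rootSpan_map_eq {g : V ≃ₗ[ℂ] V} {τ : Equiv.Perm (Fin 13 ⊕ Fin 13)}
    (hg : ∀ k, g (root k) = root (τ k)) :
    rootSpan.map (g.restrictScalars ℰ).toLinearMap = rootSpan := by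
  have himage : (g.restrictScalars ℰ).toLinearMap '' Set.range root = Set.range root := by
    rw [← Set.range_comp, ← τ.surjective.range_comp root]
    exact congrArg Set.range (funext hg)
  rw [rootSpan, Submodule.map_span, himage]

lemma exists_mem_AutL_of_gram_eq {τ : Equiv.Perm (Fin 13 ⊕ Fin 13)}
    (hτ : ∀ k l, herm (root (τ k)) (root (τ l)) = herm (root k) (root l)) :
    ∃ g ∈ AutL, ∀ k, g (root k) = root (τ k) := by
  have hspan : Submodule.span ℂ (Set.range (root ∘ τ)) = ⊤ := by
    rw [τ.surjective.range_comp, span_range_root]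
  obtain ⟨g, hg, hisom⟩ := exists_isometry_of_gram_eq hermForm_separatingRight span_range_root
    hspan hτ
  refine ⟨g, ⟨fun v => ?_, hisom⟩, hg⟩
  change v ∈ lattice ↔ g v ∈ lattice
  rw [lattice_eq_rootSpan]
  nth_rw 2 [← rootSpan_map_eq hg]
  exact (g.injective.mem_set_image (s := rootSpan)).symm

/-- The translation by `s` of a set `ι` labelled by a group `A` through `e`. For `singerPoint` and
`singerLine` these are the powers of the Singer cycle on points and on lines. -/
def labelShift {A ι : Type*} [AddGroup A] (e : A ≃ ι) (s : A) : Equiv.Perm ι :=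
  e.permCongr (Equiv.addRight s)

lemma labelShift_apply {A ι : Type*} [AddGroup A] (e : A ≃ ι) (s a : A) :
    labelShift e s (e a) = e (a + s) := by
  simp [labelShift]

lemma labelShift_neg_add_apply {A ι : Type*} [AddGroup A] (e : A ≃ ι) (i j : ι) :
    labelShift e (-e.symm i + e.symm j) i = j := by
  simp [labelShift]

lemma herm_pt_labelShift_lnr_labelShift (s i j : Fin 13) :
    herm (pt (labelShift singerPoint s i)) (lnr (labelShift singerLine s j)) =
      herm (pt i) (lnr j) := by
  obtain ⟨m, rfl⟩ := singerPoint.surjective i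
  obtain ⟨n, rfl⟩ := singerLine.surjective j
  rw [labelShift_apply, labelShift_apply, herm_pt_singerPoint_lnr_singerLine,
    herm_pt_singerPoint_lnr_singerLine, add_sub_add_right_eq_sub]

lemma herm_root_shift (s : Fin 13) (k l : Fin 13 ⊕ Fin 13) :
    herm (root (Equiv.sumCongr (labelShift singerPoint s) (labelShift singerLine s) k))
      (root (Equiv.sumCongr (labelShift singerPoint s) (labelShift singerLine s) l)) =
        herm (root k) (root l) := by
  rcases k with i | i <;> rcases l with j | j
  · simp [root, herm_pt_pt]
  · exact herm_pt_labelShift_lnr_labelShift s i j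
  · have hsymm (i j : Fin 13) : herm (lnr i) (pt j) = conj (herm (pt j) (lnr i)) :=
      (hermForm_isSymm.eq _ _).symm
    simp [root, hsymm, herm_pt_labelShift_lnr_labelShift]
  · simp [root, herm_lnr_lnr]

lemma exists_mem_Gsub_pt_eq_labelShift (s : Fin 13) :
    ∃ g ∈ Gsub, ∀ i, g (pt i) = pt (labelShift singerPoint s i) := by
  obtain ⟨g, hgL, hg⟩ := exists_mem_AutL_of_gram_eq (herm_root_shift s)
  have hpt (i : Fin 13) : g (pt i) = pt (labelShift singerPoint s i) := hg (Sum.inl i)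
  have hlnr (i : Fin 13) : g (lnr i) = lnr (labelShift singerLine s i) := hg (Sum.inr i)
  refine ⟨g, ⟨hgL, ?_, ?_⟩, hpt⟩
  · rw [← Set.range_comp, ← (labelShift singerPoint s).surjective.range_comp pt]
    exact congrArg Set.range (funext hpt)
  · rw [← Set.range_comp, ← (labelShift singerLine s).surjective.range_comp lnr]
    exact congrArg Set.range (funext hlnr)

lemma exists_mem_Gsub_pt_eq (i j : Fin 13) : ∃ g ∈ Gsub, g (pt i) = pt j := by
  obtain ⟨g, hg, hpt⟩ :=
    exists_mem_Gsub_pt_eq_labelShift (-singerPoint.symm i + singerPoint.symm j)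
  exact ⟨g, hg, by rw [hpt, labelShift_neg_add_apply]⟩

/-! ### The Weyl vector -/

lemma Gsub_apply_ρbar {g : V ≃ₗ[ℂ] V} (hg : g ∈ Gsub) : g ρbar = ρbar := by
  obtain ⟨-, hpt, hlnr⟩ := hg
  rw [ρbar, map_smul, map_add, map_smul,
    map_sum_eq_sum_of_image_range_eq pt_injective g.injective hpt,
    map_sum_eq_sum_of_image_range_eq lnr_injective g.injective hlnr]

lemma SigmaSpec.apply_ρbar {σ : V ≃ₗ[ℂ] V} (hσ : SigmaSpec σ) : σ ρbar = ξ • ρbar := by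
  obtain ⟨-, δ, -, hpt, hlnr⟩ := hσ
  have hsum_pt : σ (∑ i, pt i) = (-ω) • ∑ i, lnr i := by
    rw [map_sum, Finset.sum_congr rfl fun i _ => hpt i, ← Finset.smul_sum, δ.sum_comp lnr]
  have hsum_lnr : σ (∑ i, lnr i) = ∑ i, pt i := by
    rw [← δ.sum_comp lnr, map_sum, Finset.sum_congr rfl fun i _ => hlnr i]
  rw [ρbar, map_smul, map_add, map_smul, hsum_pt, hsum_lnr, ← ξ_sq]
  module

lemma herm_sum_pt_sum_pt : herm (∑ i, pt i) (∑ i, pt i) = -39 := by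
  rw [← hermForm_apply, apply_sum_sum_of_gram_eq_diagonal herm_pt_pt, Fintype.card_fin]
  norm_num

lemma herm_sum_lnr_sum_lnr : herm (∑ i, lnr i) (∑ i, lnr i) = -39 := by
  rw [← hermForm_apply, apply_sum_sum_of_gram_eq_diagonal herm_lnr_lnr, Fintype.card_fin]
  norm_num

lemma herm_sum_pt_sum_lnr : herm (∑ i, pt i) (∑ i, lnr i) = 52 * (√3 * conj ξ) := by
  have hcard (n : Fin 13) :
      (Finset.univ.filter fun m : Fin 13 => n - m ∈ ({0, 1, 3, 9} : Finset (Fin 13))).card = 4 := by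
    revert n
    decide
  rw [← Equiv.sum_comp singerPoint pt, ← Equiv.sum_comp singerLine lnr, ← hermForm_apply,
    ← two_add_ω_eq]
  simp only [map_sum, LinearMap.sum_apply, hermForm_apply, herm_pt_singerPoint_lnr_singerLine,
    ← Finset.sum_filter, Finset.sum_const, hcard, Finset.card_univ, Fintype.card_fin, nsmul_eq_mul]
  push_cast
  ring

lemma herm_ρbar_ρbar : herm ρbar ρbar = ((4 * √3 - 3) / 26 : ℝ) := by
  have hlnr_pt : herm (∑ i, lnr i) (∑ i, pt i) = 52 * (√3 * ξ) := by
    rw [← hermForm_apply, ← hermForm_isSymm.eq, hermForm_apply, herm_sum_pt_sum_lnr]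
    simp only [map_mul, map_ofNat, Complex.conj_ofReal, Complex.conj_conj]
  rw [ρbar, ← hermForm_apply]
  simp only [map_add, LinearMap.map_smulₛₗ, LinearMap.add_apply, LinearMap.smul_apply,
    hermForm_apply, hlnr_pt, herm_sum_pt_sum_pt, herm_sum_lnr_sum_lnr, herm_sum_pt_sum_lnr,
    smul_eq_mul, map_inv₀, map_ofNat, RingHom.id_apply]
  push_cast
  linear_combination (26 : ℂ)⁻¹ ^ 2 * (104 * √3 - 39) * conj_ξ_mul_self

lemma herm_ρbar_ρbar_re_pos : 0 < (herm ρbar ρbar).re := by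
  have hsqrt : 1 ≤ √3 := Real.one_le_sqrt.mpr (by norm_num)
  rw [herm_ρbar_ρbar, Complex.ofReal_re]
  linarith

/-- The vectors on which `G` acts trivially and `σ` acts by the scalar `ξ`. -/
def weylEigenspace (σ : V ≃ₗ[ℂ] V) : Submodule ℂ V where
  carrier := {v | (∀ g ∈ Gsub, g v = v) ∧ σ v = ξ • v}
  zero_mem' := by simp
  add_mem' := fun ⟨hu, huσ⟩ ⟨hv, hvσ⟩ =>
    ⟨fun g hg => by rw [map_add, hu g hg, hv g hg], by rw [map_add, huσ, hvσ, smul_add]⟩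
  smul_mem' := fun c v ⟨hv, hvσ⟩ =>
    ⟨fun g hg => by rw [map_smul, hv g hg], by rw [map_smul, hvσ, smul_comm]⟩

lemma SigmaSpec.ρbar_mem_weylEigenspace {σ : V ≃ₗ[ℂ] V} (hσ : SigmaSpec σ) :
    ρbar ∈ weylEigenspace σ :=
  ⟨fun _ => Gsub_apply_ρbar, hσ.apply_ρbar⟩

lemma SigmaSpec.eq_zero_of_mem_weylEigenspace {σ : V ≃ₗ[ℂ] V} (hσ : SigmaSpec σ) {v : V}
    (hv : v ∈ weylEigenspace σ) (hv0 : herm (pt 0) v = 0) : v = 0 := by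
  obtain ⟨hvG, hvσ⟩ := hv
  obtain ⟨⟨-, hσ_isom⟩, δ, -, -, hlnr⟩ := hσ
  have hpt_zero (i : Fin 13) : herm (pt i) v = 0 := by
    obtain ⟨g, hg, hgi⟩ := exists_mem_Gsub_pt_eq 0 i
    rw [← hgi, ← hvG g hg, hg.1.2, hv0]
  have hlnr_zero (i : Fin 13) : herm (lnr (δ i)) v = 0 := by
    rw [← hσ_isom, hlnr, hvσ, ← hermForm_apply, map_smul, hermForm_apply, hpt_zero, smul_zero]
  refine eq_zero_of_forall_apply_eq_zero_of_span hermForm_separatingRight span_range_root ?_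
  rintro (i | i)
  · exact hpt_zero i
  · have hi := hlnr_zero (δ.symm i)
    rwa [δ.apply_symm_apply] at hi

lemma mem_QGroup_self (σ : V ≃ₗ[ℂ] V) : σ ∈ QGroup σ :=
  Subgroup.subset_closure (Or.inl rfl)

lemma Gsub_le_QGroup (σ : V ≃ₗ[ℂ] V) : Gsub ≤ QGroup σ :=
  fun _ hg => Subgroup.subset_closure (Or.inr hg)

lemma SigmaSpec.mem_weylEigenspace {σ : V ≃ₗ[ℂ] V} (hσ : SigmaSpec σ) {v : V}
    (hv : 0 < (herm v v).re) (hfix : ∀ q ∈ QGroup σ, ∃ c : ℂ, q v = c • v) :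
    v ∈ weylEigenspace σ := by
  have hρv : herm ρbar v ≠ 0 := herm_ne_zero_of_pos herm_ρbar_ρbar_re_pos hv
  constructor
  · intro g hg
    obtain ⟨c, hc⟩ := hfix g (Gsub_le_QGroup σ hg)
    have hc1 : c = 1 := eigenvalue_eq_of_isometry (B := hermForm) hg.1.2
      (by rw [Gsub_apply_ρbar hg, one_smul]) hc (by simp) hρv
    rw [hc, hc1, one_smul]
  · obtain ⟨c, hc⟩ := hfix σ (mem_QGroup_self σ)
    rw [hc, eigenvalue_eq_of_isometry (B := hermForm) hσ.1.2 hσ.apply_ρbar hc conj_ξ_mul_self hρv]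

/-- The positive-norm complex line spanned by the Weyl vector `ρ̄` is the unique point
of the complex hyperbolic space `ℂH¹³` fixed by the group `Q = ⟨G, σ⟩`. -/
theorem stmt14 (σ : V ≃ₗ[ℂ] V) (hσ : SigmaSpec σ) :
    0 < (herm ρbar ρbar).re ∧
    (∀ q ∈ QGroup σ, ∃ c : ℂ, q ρbar = c • ρbar) ∧
    (∀ v : V, 0 < (herm v v).re →
      (∀ q ∈ QGroup σ, ∃ c : ℂ, q v = c • v) → ∃ c : ℂ, c ≠ 0 ∧ v = c • ρbar) := by
  refine ⟨herm_ρbar_ρbar_re_pos, fun q hq => ?_, fun v hv hfix => ?_⟩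
  · refine exists_eq_smul_of_mem_closure ?_ hq
    rintro g (rfl | hg)
    · exact ⟨ξ, hσ.apply_ρbar⟩
    · exact ⟨1, by rw [Gsub_apply_ρbar hg, one_smul]⟩
  · exact exists_eq_smul_of_disjoint_ker (f := hermForm (pt 0))
      (Submodule.disjoint_def.mpr fun w hw => hσ.eq_zero_of_mem_weylEigenspace hw)
      (hσ.mem_weylEigenspace hv hfix) (ne_zero_of_herm_self_re_pos hv)
      hσ.ρbar_mem_weylEigenspace (ne_zero_of_herm_self_re_pos herm_ρbar_ρbar_re_pos)

end Bimonster
end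
end

section
/- In Aut(L) one has φ_{f₁} φ_{e₁} φ_{d₁} φ_{c₁} φ_{b₁} φ_{a} φ_{b₂} φ_{c₂} φ_{d₂} φ_{e₂}(f₂) = ω² a₃, where φ_r denotes the ω-reflection in the root r; this is the 'deflating' relation for the 12-gon (f₁, e₁, d₁, c₁, b₁, a, b₂, c₂, d₂, e₂, f₂, a₃) of the diagram D. -/
noncomputable section

open ComplexConjugate

namespace Bimonster

/-!
Deleting `a₃` from the 12-gon leaves a chain `r₀, …, r₁₀` of type `A₁₁`. Each reflection meets
the image of `r₁₀` obtained so far only through its neighbour in the chain, so it adds one further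
multiple of a root: `φ_{r₀} ⋯ φ_{r₉}(r₁₀) = ∑ cᵢ rᵢ`, where `cᵢ` is `cᵢ₊₁` times the factor
`(1 - ω)⟨rᵢ, rᵢ₊₁⟩ / 3`, which is `1` or `-ω`. The deflating relation is thus the linear dependence
`∑ cᵢ rᵢ = ω² a₃` among the twelve roots of the 12-gon.
-/

lemma isPrimitiveRoot_ω : IsPrimitiveRoot ω 3 := by
  simpa [ω] using Complex.isPrimitiveRoot_exp 3 (by norm_num)

lemma herm_eq (u v : V) : herm u v =
    -(conj (u 0) * v 0 + conj (u 1) * v 1 + conj (u 2) * v 2 + conj (u 3) * v 3 +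
      conj (u 4) * v 4 + conj (u 5) * v 5 + conj (u 6) * v 6 + conj (u 7) * v 7 +
      conj (u 8) * v 8 + conj (u 9) * v 9 + conj (u 10) * v 10 + conj (u 11) * v 11) +
      conj (u 12) * conj θ * v 13 + conj (u 13) * θ * v 12 := by
  simp only [herm, Fin.sum_univ_castSucc, Finset.univ_eq_empty, Finset.sum_empty, zero_add]
  rfl

lemma isLinearMap_herm (r : V) : IsLinearMap ℂ (herm r) where
  map_add u v := by
    simp only [herm_eq, Pi.add_apply]
    ring
  map_smul a v := by
    simp only [herm_eq, Pi.smul_apply, smul_eq_mul]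
    ring

lemma herm_sum_smul_right {ι : Type*} (s : Finset ι) (r : V) (c : ι → ℂ) (v : ι → V) :
    herm r (∑ i ∈ s, c i • v i) = ∑ i ∈ s, c i * herm r (v i) := by
  simpa only [map_smul, smul_eq_mul, IsLinearMap.mk'_apply] using
    map_sum (isLinearMap_herm r).mk' (fun i => c i • v i) s

theorem foldr_reflMap_eq_sum (μ : ℂ) {n : ℕ} (r : Fin (n + 1) → V) (c : Fin (n + 1) → ℂ)
    (orthogonal : ∀ i j : Fin (n + 1), (i : ℕ) + 1 < j → herm (r i) (r j) = 0)
    (coeff : ∀ i : Fin n, c i.castSucc =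
      (μ - 1) * herm (r i.castSucc) (r i.succ) / herm (r i.castSucc) (r i.castSucc) * c i.succ) :
    Fin.foldr n (fun i => reflMap μ (r i.castSucc)) (c (Fin.last n) • r (Fin.last n)) =
      ∑ i, c i • r i := by
  induction n with
  | zero => simp
  | succ n ih =>
    have tail : Fin.foldr n (fun i => reflMap μ (r i.succ.castSucc))
        (c (Fin.last (n + 1)) • r (Fin.last (n + 1))) = ∑ i : Fin (n + 1), c i.succ • r i.succ :=
      ih (r ∘ Fin.succ) (c ∘ Fin.succ) (fun i j hij => orthogonal _ _ (by simpa using hij))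
        (fun i => coeff i.succ)
    have inner : herm (r 0) (∑ i : Fin (n + 1), c i.succ • r i.succ) =
        c 1 * herm (r 0) (r 1) := by
      rw [herm_sum_smul_right, Fin.sum_univ_succ, Finset.sum_eq_zero, add_zero,
        Fin.succ_zero_eq_one]
      intro i _
      rw [orthogonal 0 i.succ.succ (by simp), mul_zero]
    have coeff_zero : c 0 = (μ - 1) * herm (r 0) (r 1) / herm (r 0) (r 0) * c 1 := coeff 0
    rw [Fin.foldr_succ, tail, Fin.castSucc_zero, reflMap, inner, Fin.sum_univ_succ (n := n + 1),
      coeff_zero, sub_eq_add_neg, add_comm, ← neg_smul]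
    congr 2
    ring

/-- The roots of the 12-gon other than `a₃`, in cyclic order: a chain of type `A₁₁`. -/
def chain : Fin 11 → V := ![rF1, rE1, rD1, rC1, rB1, rA, rB2, rC2, rD2, rE2, rF2]

/-- The coefficients of the chain roots in the image of `f₂`, normalised to be `1` at `f₂`. -/
def chainCoeff : Fin 11 → ℂ := ![-ω ^ 2, ω, ω, -1, -1, ω ^ 2, ω ^ 2, -ω, -ω, 1, 1]

lemma herm_chain_self (i : Fin 11) : herm (chain i) (chain i) = -3 := by
  fin_cases i <;> simp only [herm_eq, chain, rF1, rE1, rD1, rC1, rB1, rA, rB2, rC2, rD2, rE2, rF2,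
    Fin.reduceFinMk, Matrix.cons_val, map_zero, map_one, map_neg, map_sub, map_mul, map_add,
    map_pow, Complex.conj_ofNat, conj_ω, θ_eq, qc_eq] <;> grind [ω_sq]

lemma herm_chain_succ (i : Fin 10) : herm (chain i.castSucc) (chain i.succ) =
    if Even (i : ℕ) then 1 - ω else 1 - ω ^ 2 := by
  fin_cases i <;> simp only [herm_eq, chain, rF1, rE1, rD1, rC1, rB1, rA, rB2, rC2, rD2, rE2, rF2,
    Fin.reduceFinMk, Fin.reduceCastSucc, Fin.reduceSucc, Matrix.cons_val, map_zero, map_one,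
    map_neg, map_sub, map_mul, map_add, map_pow, Complex.conj_ofNat, conj_ω, θ_eq, qc_eq] <;>
    grind [ω_sq]

lemma herm_chain_eq_zero (i j : Fin 11) (hij : (i : ℕ) + 1 < j) :
    herm (chain i) (chain j) = 0 := by
  fin_cases i <;> fin_cases j <;> first
    | exact absurd hij (by decide)
    | simp [herm_eq, chain, rF1, rE1, rD1, rC1, rB1, rA, rB2, rC2, rD2, rE2, rF2]

lemma reflMap_factor_chain (i : Fin 10) : (ω - 1) * herm (chain i.castSucc) (chain i.succ) /
    herm (chain i.castSucc) (chain i.castSucc) = if Even (i : ℕ) then -ω else 1 := by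
  rw [herm_chain_self, herm_chain_succ]
  split_ifs
  · linear_combination ω_sq / 3
  · linear_combination (ω - 2) / 3 * ω_sq

lemma chainCoeff_castSucc (i : Fin 10) : chainCoeff i.castSucc =
    (ω - 1) * herm (chain i.castSucc) (chain i.succ) /
      herm (chain i.castSucc) (chain i.castSucc) * chainCoeff i.succ := by
  rw [reflMap_factor_chain]
  fin_cases i <;> simp only [chainCoeff, Fin.reduceFinMk, Fin.reduceCastSucc, Fin.reduceSucc,
    Matrix.cons_val] <;> grind [ω_sq]

lemma sum_chainCoeff_smul_chain : ∑ i, chainCoeff i • chain i = ω ^ 2 • rA3 := by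
  simp only [Fin.sum_univ_castSucc, Finset.univ_eq_empty, Finset.sum_empty, zero_add]
  funext k
  fin_cases k <;> simp only [chainCoeff, chain, rF1, rE1, rD1, rC1, rB1, rA, rB2, rC2, rD2, rE2,
    rF2, rA3, qc_eq, Fin.reduceFinMk, Fin.reduceCastSucc, Fin.reduceLast, Matrix.cons_val,
    Pi.add_apply, Pi.smul_apply, smul_eq_mul] <;> grind [ω_sq]

theorem stmt19 :
    reflMap ω rF1 (reflMap ω rE1 (reflMap ω rD1 (reflMap ω rC1 (reflMap ω rB1
      (reflMap ω rA (reflMap ω rB2 (reflMap ω rC2 (reflMap ω rD2 (reflMap ω rE2 rF2))))))))) =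
      ω ^ 2 • rA3 := by
  calc
    _ = Fin.foldr 10 (fun i => reflMap ω (chain i.castSucc))
          (chainCoeff (Fin.last 10) • chain (Fin.last 10)) := by
      rw [show chainCoeff (Fin.last 10) = 1 from rfl, one_smul]
      rfl
    _ = ∑ i, chainCoeff i • chain i :=
      foldr_reflMap_eq_sum ω chain chainCoeff herm_chain_eq_zero chainCoeff_castSucc
    _ = ω ^ 2 • rA3 := sum_chainCoeff_smul_chain

end Bimonster
end
end
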